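/- There exists an absolute constant C > 0 such that for all λ ≥ 1, all real ξ₂ ≠ 0 and τ₂, all integers k, k₁ ≥ 0 and all K₁ > 0 the following holds. Let Λ be the set of (ξ, τ) ∈ ℝ² such that, writing ξ₁ = ξ − ξ₂ and τ₁ = τ − τ₂: ξ ≠ 0, ξ₁ ≠ 0, ⟨τ + ξ³ + 1/(λ⁴ξ)⟩ ≤ 2^{k+1}, ⟨τ₁ + ξ₁³ + 1/(λ⁴ξ₁)⟩ ≤ 2^{k₁+1}, |ξ + ξ₁| ≥ K₁, and either ξξ₁ < 0 or |1 − 4/(3λ⁴ξξ₁ξ₂²)| > 1/2. Then the two-dimensional Lebesgue measure of Λ is at most C · min{ |ξ₂|^{-1/2} 2^{k/2 + k₁}, K₁^{-1} |ξ₂|^{-1} 2^{k + k₁} }. -/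

import Mathlib

open MeasureTheory Set
open scoped ENNReal NNReal

noncomputable section

/-- Japanese bracket `⟨x⟩ = (1+x²)^{1/2}`. -/
def jb (x : ℝ) : ℝ := Real.sqrt (1 + x ^ 2)

/-- Phase/modulation function `σ(ξ,τ) = τ + ξ³ + 1/(λ⁴ξ)`. -/
def phase (lam ξ τ : ℝ) : ℝ := τ + ξ ^ 3 + 1 / (lam ^ 4 * ξ)

/-!
Subtracting the two modulations eliminates `τ`. With `ξ₁ = ξ - ξ₂` and `P = ξ ξ₁`, what remains is
`τ₂ + ξ₂ (ξ₂² + 3P - μ / P)`, where `μ = 1 / λ⁴`. As `μ ≥ 0`, the function `3P - μ / P` increases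
with slope at least `3` on each half-line `P < 0` and `P > 0`, while `P(u) - P(v)` factors as
`(u - v) (u + v - ξ₂)`. Hence, once the signs of `P` and of `ξ + ξ₁` are fixed, any two admissible
frequencies `u`, `v` satisfy `|ξ₂| |u - v| max(K₁, |u - v|) ≲ 2 ^ k + 2 ^ k₁`, which bounds the
diameter of each of the four pieces. For fixed `ξ`, the admissible `τ` lie in an interval of length
`≲ 2 ^ min(k, k₁)`.
-/

section Measure

lemma measure_prod_setOf_abs_add_le {α : Type*} [MeasurableSpace α] (ν : Measure α) [SFinite ν]
    (E : Set α) {c : α → ℝ} (hc : Measurable c) (m : ℝ) :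
    (ν.prod volume) {p : α × ℝ | p.1 ∈ E ∧ |p.2 + c p.1| ≤ m} ≤
      ENNReal.ofReal (2 * m) * ν E := by
  have shear : MeasurePreserving (fun p : α × ℝ => (p.1, p.2 + c p.1))
      (ν.prod volume) (ν.prod volume) :=
    (MeasurePreserving.id ν).skew_product (g := fun x y => y + c x)
      (measurable_snd.add (hc.comp measurable_fst))
      (ae_of_all _ fun x => map_add_right_eq_self volume (c x))
  calc (ν.prod volume) {p : α × ℝ | p.1 ∈ E ∧ |p.2 + c p.1| ≤ m}
      = (ν.prod volume) ((fun p => (p.1, p.2 + c p.1)) ⁻¹' (E ×ˢ Metric.closedBall (0 : ℝ) m)) := by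
        congr 1
        ext p
        simp
    _ ≤ (ν.prod volume) (E ×ˢ Metric.closedBall (0 : ℝ) m) :=
        (Measure.le_map_apply shear.aemeasurable _).trans_eq (by rw [shear.map_eq])
    _ = ENNReal.ofReal (2 * m) * ν E := by
        rw [Measure.prod_prod, Real.volume_closedBall, mul_comm]

lemma volume_le_ofReal_of_abs_sub_le {E : Set ℝ} {D : ℝ}
    (h : ∀ u ∈ E, ∀ v ∈ E, |u - v| ≤ D) : volume E ≤ ENNReal.ofReal D := by
  refine (Real.volume_le_diam E).trans (Metric.ediam_le fun u hu v hv => ?_)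
  rw [edist_dist, Real.dist_eq]
  exact ENNReal.ofReal_le_ofReal (h u hu v hv)

lemma volume_le_card_mul_of_coloring {ι : Type*} [Fintype ι] (color : ℝ → ι) {E : Set ℝ} {D : ℝ}
    (h : ∀ u ∈ E, ∀ v ∈ E, color u = color v → |u - v| ≤ D) :
    volume E ≤ Fintype.card ι * ENNReal.ofReal D := by
  have piece (i : ι) : volume (E ∩ color ⁻¹' {i}) ≤ ENNReal.ofReal D :=
    volume_le_ofReal_of_abs_sub_le fun u hu v hv => h u hu.1 v hv.1 (hu.2.trans hv.2.symm)
  calc volume E ≤ volume (⋃ i, E ∩ color ⁻¹' {i}) :=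
        measure_mono fun u hu => mem_iUnion.2 ⟨color u, hu, rfl⟩
    _ ≤ ∑ i, volume (E ∩ color ⁻¹' {i}) := measure_iUnion_fintype_le _ _
    _ ≤ ∑ _i : ι, ENNReal.ofReal D := Finset.sum_le_sum fun i _ => piece i
    _ = Fintype.card ι * ENNReal.ofReal D := by simp

end Measure

section Inequalities

lemma mul_pos_of_pos_iff_pos {R : Type*} [Ring R] [LinearOrder R] [IsStrictOrderedRing R]
    {x y : R} (hx : x ≠ 0) (hy : y ≠ 0) (h : 0 < x ↔ 0 < y) : 0 < x * y := by
  rcases hx.lt_or_gt with hx | hx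
  · exact mul_pos_of_neg_of_neg hx (hy.lt_or_gt.resolve_right fun hy => (h.2 hy).not_gt hx)
  · exact mul_pos hx (h.1 hx)

lemma max_abs_sub_le_abs_add {R : Type*} [Ring R] [LinearOrder R] [IsStrictOrderedRing R]
    {K s t : R} (hst : 0 ≤ s * t) (hs : K ≤ |s|) (ht : K ≤ |t|) :
    max (2 * K) |s - t| ≤ |s + t| := by
  have h_add : |s + t| = |s| + |t| := (abs_add_eq_add_abs_iff s t).2 (mul_nonneg_iff.1 hst)
  rw [h_add, two_mul]
  exact max_le (add_le_add hs ht) (abs_sub s t)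

lemma mul_abs_sub_le_abs_sub_div {F : Type*} [Field F] [LinearOrder F] [IsStrictOrderedRing F]
    {c μ P Q : F} (hμ : 0 ≤ μ) (hPQ : 0 < P * Q) :
    c * |P - Q| ≤ |(c * P - μ / P) - (c * Q - μ / Q)| := by
  have hP : P ≠ 0 := left_ne_zero_of_mul hPQ.ne'
  have hQ : Q ≠ 0 := right_ne_zero_of_mul hPQ.ne'
  calc c * |P - Q| ≤ |c + μ / (P * Q)| * |P - Q| := by
        gcongr
        exact (le_add_of_nonneg_right (by positivity)).trans (le_abs_self _)
    _ = |(c * P - μ / P) - (c * Q - μ / Q)| := by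
        rw [← abs_mul]
        congr 1
        field_simp
        ring

lemma le_min_sqrt_div_of_mul_max_le {c d K : ℝ} (hd : 0 ≤ d) (hK : 0 < K)
    (h : d * max K d ≤ c) : d ≤ min (√c) (c / K) := by
  refine le_min (Real.le_sqrt_of_sq_le ?_) ((le_div_iff₀ hK).2 ?_)
  · rw [sq]
    exact (mul_le_mul_of_nonneg_left (le_max_right K d) hd).trans h
  · exact (mul_le_mul_of_nonneg_left (le_max_left K d) hd).trans h

lemma min_mul_add_le_two_mul {R : Type*} [CommRing R] [LinearOrder R] [IsStrictOrderedRing R]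
    {a b : R} (ha : 0 ≤ a) (hb : 0 ≤ b) : min a b * (a + b) ≤ 2 * (a * b) := by
  linarith [mul_le_mul_of_nonneg_right (min_le_right a b) ha,
    mul_le_mul_of_nonneg_right (min_le_left a b) hb]

lemma min_mul_sqrt_add_le {a b : ℝ} (ha : 0 ≤ a) (hb : 0 ≤ b) :
    min a b * √(a + b) ≤ √2 * (√a * b) := by
  refine le_of_sq_le_sq ?_ (by positivity)
  calc (min a b * √(a + b)) ^ 2 = min a b * (min a b * (a + b)) := by
        rw [mul_pow, Real.sq_sqrt (by positivity)]
        ring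
    _ ≤ b * (2 * (a * b)) :=
        mul_le_mul (min_le_right a b) (min_mul_add_le_two_mul ha hb) (by positivity) hb
    _ = (√2 * (√a * b)) ^ 2 := by
        rw [mul_pow, mul_pow, Real.sq_sqrt zero_le_two, Real.sq_sqrt ha]
        ring

lemma min_mul_min_sqrt_div_le {a b x K : ℝ} (ha : 0 ≤ a) (hb : 0 ≤ b) (hx : 0 < x) (hK : 0 < K) :
    min a b * min (√((a + b) / x)) ((a + b) / x / K) ≤
      2 * min (x ^ (-(1 : ℝ) / 2) * (√a * b)) (K⁻¹ * x⁻¹ * (a * b)) := by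
  have hm : 0 ≤ min a b := le_min ha hb
  have h_rpow : x ^ (-(1 : ℝ) / 2) = (√x)⁻¹ := by
    rw [Real.sqrt_eq_rpow, ← Real.rpow_neg hx.le, neg_div]
  rw [mul_min_of_nonneg _ _ hm, mul_min_of_nonneg _ _ zero_le_two, h_rpow]
  refine min_le_min ?_ ?_
  · calc min a b * √((a + b) / x) = (√x)⁻¹ * (min a b * √(a + b)) := by
          rw [Real.sqrt_div (by positivity)]
          ring
      _ ≤ (√x)⁻¹ * (2 * (√a * b)) := by
          refine mul_le_mul_of_nonneg_left ((min_mul_sqrt_add_le ha hb).trans ?_) (by positivity)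
          gcongr
          exact Real.sqrt_le_iff.2 ⟨zero_le_two, by norm_num⟩
      _ = 2 * ((√x)⁻¹ * (√a * b)) := by ring
  · calc min a b * ((a + b) / x / K) = K⁻¹ * x⁻¹ * (min a b * (a + b)) := by ring
      _ ≤ K⁻¹ * x⁻¹ * (2 * (a * b)) :=
          mul_le_mul_of_nonneg_left (min_mul_add_le_two_mul ha hb) (by positivity)
      _ = 2 * (K⁻¹ * x⁻¹ * (a * b)) := by ring

lemma sqrt_two_rpow_mul_two_rpow_le (k k₁ : ℝ) :
    √(2 ^ (k + 1)) * 2 ^ (k₁ + 1) ≤ 4 * (2 : ℝ) ^ (k / 2 + k₁) := by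
  calc √(2 ^ (k + 1)) * 2 ^ (k₁ + 1) = (2 : ℝ) ^ ((k + 1) / 2 + (k₁ + 1)) := by
        rw [Real.sqrt_eq_rpow, ← Real.rpow_mul zero_le_two, ← Real.rpow_add two_pos]
        ring_nf
    _ ≤ 2 ^ (2 + (k / 2 + k₁)) := Real.rpow_le_rpow_of_exponent_le one_le_two (by linarith)
    _ = 4 * 2 ^ (k / 2 + k₁) := by
        rw [Real.rpow_add two_pos]
        norm_num

lemma abs_le_jb (x : ℝ) : |x| ≤ jb x :=
  Real.abs_le_sqrt (by linarith)

end Inequalities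

section Resonance

/-- The dispersion relation `ξ³ + μ / ξ` of the Ostrovsky equation, with rotation coefficient `μ`;
`μ ≥ 0` is the case of positive dispersion and `μ = 1 / λ⁴` gives the weight `phase`. -/
def dispersion (μ ξ : ℝ) : ℝ := ξ ^ 3 + μ / ξ

lemma phase_eq_add_dispersion (lam ξ τ : ℝ) :
    phase lam ξ τ = τ + dispersion (1 / lam ^ 4) ξ := by
  rw [phase, dispersion, div_div, add_assoc]

@[fun_prop]
lemma measurable_dispersion (μ : ℝ) : Measurable (dispersion μ) := by
  unfold dispersion
  fun_prop

/-- The resonance function of the interaction of `ξ₂` and `ξ - ξ₂` into `ξ`, up to the dispersion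
of the fixed frequency `ξ₂`. -/
def resonance (μ ξ₂ ξ : ℝ) : ℝ := dispersion μ ξ - dispersion μ (ξ - ξ₂)

lemma resonance_eq {μ ξ₂ ξ : ℝ} (hξ : ξ ≠ 0) (hξ₁ : ξ - ξ₂ ≠ 0) :
    resonance μ ξ₂ ξ = ξ₂ * (ξ₂ ^ 2 + (3 * (ξ * (ξ - ξ₂)) - μ / (ξ * (ξ - ξ₂)))) := by
  unfold resonance dispersion
  field_simp
  ring

lemma mul_abs_sub_le_abs_resonance_sub {μ ξ₂ u v : ℝ} (hμ : 0 ≤ μ)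
    (h : 0 < u * (u - ξ₂) * (v * (v - ξ₂))) :
    3 * |ξ₂| * (|u - v| * |u + v - ξ₂|) ≤ |resonance μ ξ₂ u - resonance μ ξ₂ v| := by
  obtain ⟨hu, hu₁⟩ := mul_ne_zero_iff.1 (left_ne_zero_of_mul h.ne')
  obtain ⟨hv, hv₁⟩ := mul_ne_zero_iff.1 (right_ne_zero_of_mul h.ne')
  calc 3 * |ξ₂| * (|u - v| * |u + v - ξ₂|)
      = |ξ₂| * (3 * |u * (u - ξ₂) - v * (v - ξ₂)|) := by
        rw [← abs_mul, show (u - v) * (u + v - ξ₂) = u * (u - ξ₂) - v * (v - ξ₂) by ring]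
        ring
    _ ≤ |ξ₂| * |(3 * (u * (u - ξ₂)) - μ / (u * (u - ξ₂))) -
          (3 * (v * (v - ξ₂)) - μ / (v * (v - ξ₂)))| := by
        gcongr
        exact mul_abs_sub_le_abs_sub_div hμ h
    _ = |resonance μ ξ₂ u - resonance μ ξ₂ v| := by
        rw [resonance_eq hu hu₁, resonance_eq hv hv₁, ← mul_sub, abs_mul, add_sub_add_left_eq_sub]

/-- The frequencies `ξ` whose resonance function is within `M` of `-τ₂` and for which `ξ` and
`ξ₁ = ξ - ξ₂` satisfy `|ξ + ξ₁| ≥ K`. The poles `ξ = 0` and `ξ₁ = 0` of the dispersion relation,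
where division by zero would give `0`, are removed. -/
def resonantSet (μ ξ₂ τ₂ M K : ℝ) : Set ℝ :=
  {ξ | ξ ≠ 0 ∧ ξ - ξ₂ ≠ 0 ∧ |τ₂ + resonance μ ξ₂ ξ| ≤ M ∧ K ≤ |ξ + (ξ - ξ₂)|}

/-- The points `(ξ, τ)` at which the modulations of `(ξ, τ)` and `(ξ₁, τ₁) = (ξ - ξ₂, τ - τ₂)` are
at most `a` and `b`, with the same restrictions on `ξ` as in `resonantSet`. -/
def modulationSet (μ ξ₂ τ₂ a b K : ℝ) : Set (ℝ × ℝ) :=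
  {p | p.1 ≠ 0 ∧ p.1 - ξ₂ ≠ 0 ∧ |p.2 + dispersion μ p.1| ≤ a ∧
    |p.2 - τ₂ + dispersion μ (p.1 - ξ₂)| ≤ b ∧ K ≤ |p.1 + (p.1 - ξ₂)|}

variable {μ ξ₂ τ₂ K : ℝ}

lemma abs_sub_mul_max_le_of_mem_resonantSet {M u v : ℝ} (hμ : 0 ≤ μ) (hξ₂ : ξ₂ ≠ 0)
    (hu : u ∈ resonantSet μ ξ₂ τ₂ M K) (hv : v ∈ resonantSet μ ξ₂ τ₂ M K)
    (h_prod : 0 < u * (u - ξ₂) * (v * (v - ξ₂)))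
    (h_sum : 0 ≤ (u + (u - ξ₂)) * (v + (v - ξ₂))) :
    |u - v| * max K |u - v| ≤ M / |ξ₂| := by
  obtain ⟨-, -, hMu, hKu⟩ := hu
  obtain ⟨-, -, hMv, hKv⟩ := hv
  have h_max : max K |u - v| ≤ |u + v - ξ₂| := by
    have h := max_abs_sub_le_abs_add h_sum hKu hKv
    rw [show u + (u - ξ₂) - (v + (v - ξ₂)) = 2 * (u - v) by ring,
      show u + (u - ξ₂) + (v + (v - ξ₂)) = 2 * (u + v - ξ₂) by ring,
      abs_mul, abs_mul, abs_two, ← mul_max_of_nonneg _ _ zero_le_two] at h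
    linarith
  have h_res : |resonance μ ξ₂ u - resonance μ ξ₂ v| ≤ 2 * M := by
    rw [← add_sub_add_left_eq_sub _ _ τ₂]
    exact (abs_sub _ _).trans (by linarith)
  have h_gap : 3 * |ξ₂| * (|u - v| * max K |u - v|) ≤ 2 * M :=
    calc 3 * |ξ₂| * (|u - v| * max K |u - v|) ≤ 3 * |ξ₂| * (|u - v| * |u + v - ξ₂|) := by gcongr
      _ ≤ |resonance μ ξ₂ u - resonance μ ξ₂ v| := mul_abs_sub_le_abs_resonance_sub hμ h_prod
      _ ≤ 2 * M := h_res
  have hM : 0 ≤ M := (abs_nonneg _).trans hMu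
  rw [le_div_iff₀ (abs_pos.2 hξ₂)]
  linarith

lemma volume_resonantSet_le (hμ : 0 ≤ μ) (hξ₂ : ξ₂ ≠ 0) (hK : 0 < K) (M : ℝ) :
    volume (resonantSet μ ξ₂ τ₂ M K) ≤
      4 * ENNReal.ofReal (min (√(M / |ξ₂|)) (M / |ξ₂| / K)) := by
  let signs (ξ : ℝ) : Prop × Prop := (0 < ξ * (ξ - ξ₂), 0 < ξ + (ξ - ξ₂))
  have h_diam : ∀ u ∈ resonantSet μ ξ₂ τ₂ M K, ∀ v ∈ resonantSet μ ξ₂ τ₂ M K,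
      signs u = signs v → |u - v| ≤ min (√(M / |ξ₂|)) (M / |ξ₂| / K) := by
    intro u hu v hv h_signs
    obtain ⟨h_prod, h_sum⟩ := Prod.ext_iff.1 h_signs
    refine le_min_sqrt_div_of_mul_max_le (abs_nonneg _) hK
      (abs_sub_mul_max_le_of_mem_resonantSet hμ hξ₂ hu hv ?_ ?_)
    · exact mul_pos_of_pos_iff_pos (mul_ne_zero hu.1 hu.2.1) (mul_ne_zero hv.1 hv.2.1)
        (iff_of_eq h_prod)
    · exact (mul_pos_of_pos_iff_pos (abs_pos.1 (hK.trans_le hu.2.2.2))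
        (abs_pos.1 (hK.trans_le hv.2.2.2)) (iff_of_eq h_sum)).le
  simpa using volume_le_card_mul_of_coloring signs h_diam

lemma volume_modulationSet_le_mul_volume_resonantSet (μ ξ₂ τ₂ a b K : ℝ) :
    volume (modulationSet μ ξ₂ τ₂ a b K) ≤
      ENNReal.ofReal (2 * min a b) * volume (resonantSet μ ξ₂ τ₂ (a + b) K) := by
  set Λ := modulationSet μ ξ₂ τ₂ a b K
  have h_fst : ∀ p ∈ Λ, p.1 ∈ resonantSet μ ξ₂ τ₂ (a + b) K := by
    rintro p ⟨hξ, hξ₁, ha, hb, hK⟩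
    refine ⟨hξ, hξ₁, ?_, hK⟩
    calc |τ₂ + resonance μ ξ₂ p.1|
        = |p.2 + dispersion μ p.1 - (p.2 - τ₂ + dispersion μ (p.1 - ξ₂))| := by
          rw [resonance]
          ring_nf
      _ ≤ a + b := (abs_sub _ _).trans (add_le_add ha hb)
  have h_slab {c : ℝ → ℝ} {m : ℝ} (hc : Measurable c) (h : ∀ p ∈ Λ, |p.2 + c p.1| ≤ m) :
      volume Λ ≤ ENNReal.ofReal (2 * m) * volume (resonantSet μ ξ₂ τ₂ (a + b) K) := by
    refine le_trans (measure_mono fun p hp => ?_) (measure_prod_setOf_abs_add_le volume _ hc m)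
    exact ⟨h_fst p hp, h p hp⟩
  rcases min_choice a b with h_min | h_min <;> rw [h_min]
  · exact h_slab (measurable_dispersion μ) fun p hp => hp.2.2.1
  · refine h_slab (c := fun ξ => -τ₂ + dispersion μ (ξ - ξ₂)) (by fun_prop) fun p hp => ?_
    rw [← add_assoc, ← sub_eq_add_neg]
    exact hp.2.2.2.1

lemma volume_modulationSet_le {a b : ℝ} (hμ : 0 ≤ μ) (hξ₂ : ξ₂ ≠ 0) (hK : 0 < K)
    (ha : 0 ≤ a) (hb : 0 ≤ b) :
    volume (modulationSet μ ξ₂ τ₂ a b K) ≤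
      ENNReal.ofReal (16 * min (|ξ₂| ^ (-(1 : ℝ) / 2) * (√a * b)) (K⁻¹ * |ξ₂|⁻¹ * (a * b))) := by
  refine (volume_modulationSet_le_mul_volume_resonantSet μ ξ₂ τ₂ a b K).trans ?_
  calc ENNReal.ofReal (2 * min a b) * volume (resonantSet μ ξ₂ τ₂ (a + b) K)
      ≤ ENNReal.ofReal (2 * min a b) *
          (4 * ENNReal.ofReal (min (√((a + b) / |ξ₂|)) ((a + b) / |ξ₂| / K))) := by
        gcongr
        exact volume_resonantSet_le hμ hξ₂ hK _
    _ = ENNReal.ofReal (8 * (min a b * min (√((a + b) / |ξ₂|)) ((a + b) / |ξ₂| / K))) := by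
        rw [← ENNReal.ofReal_ofNat 4, ← ENNReal.ofReal_mul (by norm_num),
          ← ENNReal.ofReal_mul (by positivity)]
        ring_nf
    _ ≤ _ := ENNReal.ofReal_le_ofReal <| by
        linarith [min_mul_min_sqrt_div_le ha hb (abs_pos.2 hξ₂) hK]

end Resonance

theorem ostrovsky_dual_measure_bound_general {μ ξ₂ K₁ : ℝ} (hμ : 0 ≤ μ) (hξ₂ : ξ₂ ≠ 0)
    (hK₁ : 0 < K₁) (τ₂ k k₁ : ℝ) :
    volume {p : ℝ × ℝ | p.1 ≠ 0 ∧ p.1 - ξ₂ ≠ 0 ∧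
        jb (p.2 + dispersion μ p.1) ≤ 2 ^ (k + 1) ∧
        jb (p.2 - τ₂ + dispersion μ (p.1 - ξ₂)) ≤ 2 ^ (k₁ + 1) ∧
        K₁ ≤ |p.1 + (p.1 - ξ₂)|} ≤
      ENNReal.ofReal (64 * min (|ξ₂| ^ (-(1 : ℝ) / 2) * 2 ^ (k / 2 + k₁))
        (K₁⁻¹ * |ξ₂|⁻¹ * 2 ^ (k + k₁))) := by
  have h_pow : (2 : ℝ) ^ (k + 1) * 2 ^ (k₁ + 1) = 4 * 2 ^ (k + k₁) := by
    rw [Real.rpow_add_one two_ne_zero, Real.rpow_add_one two_ne_zero, Real.rpow_add two_pos]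
    ring
  refine (measure_mono fun p hp => ?_).trans <|
    (volume_modulationSet_le (τ₂ := τ₂) hμ hξ₂ hK₁ (a := 2 ^ (k + 1)) (b := 2 ^ (k₁ + 1))
      (by positivity) (by positivity)).trans <| ENNReal.ofReal_le_ofReal ?_
  · obtain ⟨hξ, hξ₁, hσ, hσ₁, hK⟩ := hp
    exact ⟨hξ, hξ₁, (abs_le_jb _).trans hσ, (abs_le_jb _).trans hσ₁, hK⟩
  · calc 16 * min (|ξ₂| ^ (-(1 : ℝ) / 2) * (√(2 ^ (k + 1)) * 2 ^ (k₁ + 1)))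
            (K₁⁻¹ * |ξ₂|⁻¹ * (2 ^ (k + 1) * 2 ^ (k₁ + 1)))
        ≤ 16 * min (|ξ₂| ^ (-(1 : ℝ) / 2) * (4 * 2 ^ (k / 2 + k₁)))
            (K₁⁻¹ * |ξ₂|⁻¹ * (4 * 2 ^ (k + k₁))) := by
          rw [h_pow]
          gcongr 16 * min (_ * ?_) _
          exact sqrt_two_rpow_mul_two_rpow_le k k₁
      _ = 64 * min (|ξ₂| ^ (-(1 : ℝ) / 2) * 2 ^ (k / 2 + k₁))
            (K₁⁻¹ * |ξ₂|⁻¹ * 2 ^ (k + k₁)) := by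
          rw [mul_left_comm _ 4, mul_left_comm _ 4, ← mul_min_of_nonneg _ _ zero_le_four]
          ring

/-- Dual-form measure bound, over the output variables `(ξ,τ)`, for localized modulations
under the nonresonance condition of the Ostrovsky equation with positive dispersion. -/
theorem ostrovsky_dual_measure_bound :
    ∃ C : ℝ, 0 < C ∧ ∀ lam : ℝ, 1 ≤ lam → ∀ ξ₂ τ₂ : ℝ, ξ₂ ≠ 0 →
    ∀ k k₁ : ℕ, ∀ K₁ : ℝ, 0 < K₁ →
      volume {p : ℝ × ℝ |
          p.1 ≠ 0 ∧ p.1 - ξ₂ ≠ 0 ∧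
          jb (phase lam p.1 p.2) ≤ 2 ^ (k + 1) ∧
          jb (phase lam (p.1 - ξ₂) (p.2 - τ₂)) ≤ 2 ^ (k₁ + 1) ∧
          K₁ ≤ |p.1 + (p.1 - ξ₂)| ∧
          (p.1 * (p.1 - ξ₂) < 0 ∨
            1 / 2 < |1 - 4 / (3 * lam ^ 4 * p.1 * (p.1 - ξ₂) * ξ₂ ^ 2)|)}
        ≤ ENNReal.ofReal (C * min (|ξ₂| ^ (-(1 : ℝ) / 2) * 2 ^ ((k : ℝ) / 2 + (k₁ : ℝ)))
            (K₁⁻¹ * |ξ₂|⁻¹ * 2 ^ (k + k₁))) := by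
  refine ⟨64, by norm_num, fun lam _ ξ₂ τ₂ hξ₂ k k₁ K₁ hK₁ => ?_⟩
  have h := ostrovsky_dual_measure_bound_general (μ := 1 / lam ^ 4) (by positivity) hξ₂ hK₁ τ₂ k k₁
  simp only [phase_eq_add_dispersion]
  refine le_trans (measure_mono ?_) (mod_cast h)
  exact fun p ⟨hξ, hξ₁, hσ, hσ₁, hK, _⟩ => ⟨hξ, hξ₁, mod_cast hσ, mod_cast hσ₁, hK⟩

end
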